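/- Let σ be a real polynomial of degree k, let X^(1),…,X^(N) ∈ ℝ^d be i.i.d. random vectors whose coordinates are jointly continuous, and let Y_i = f_{N1}(W*, X^(i)) be labels from an L-layer teacher network N1 of width m* with activation σ. Let N2 be any student network with the same polynomial activation σ, depth L and width m̂ ≥ m*, with weights Ŵ interpolating the data: f_{N2}(Ŵ, X^(i)) = Y_i for all i ∈ [N]. Then, provided N ≥ Σ_{t=0}^{k^L} binom(d+t−1, t), with probability one over X^(1),…,X^(N), f_{N1}(W*, x) = f_{N2}(Ŵ, x) for every x ∈ ℝ^d. -/

import Mathlib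

open MeasureTheory Polynomial Matrix
open scoped Classical

noncomputable section

/-- One layer of a neural network: apply the weight matrix, then the activation
coordinatewise. -/
def applyLayer (σ : ℝ → ℝ) {m n : ℕ} (W : Matrix (Fin m) (Fin n) ℝ) (v : Fin n → ℝ) :
    Fin m → ℝ :=
  fun j => σ (∑ i, W j i * v i)

/-- Iterated application of `n` square hidden layers. -/
def iterLayers (σ : ℝ → ℝ) {m : ℕ} :
    (n : ℕ) → (Fin n → Matrix (Fin m) (Fin m) ℝ) → (Fin m → ℝ) → (Fin m → ℝ)
  | 0, _, v => v
  | n + 1, W, v => applyLayer σ (W (Fin.last n)) (iterLayers σ n (fun i => W i.castSucc) v)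

/-- Output of a neural network of depth `n+1` (one rectangular layer `W1` followed by
`n` square layers `Ws` and output weights `a`):
`f(W,x) = aᵀ σ(W_{n+1} σ( ⋯ σ(W_1 x) ⋯ ))`. -/
def nnFun (σ : ℝ → ℝ) {d m n : ℕ} (a : Fin m → ℝ)
    (W1 : Matrix (Fin m) (Fin d) ℝ) (Ws : Fin n → Matrix (Fin m) (Fin m) ℝ)
    (x : Fin d → ℝ) : ℝ :=
  ∑ j, a j * iterLayers σ n Ws (applyLayer σ W1 x) j

/-- The monomial `x_α = ∏ i, (x i) ^ (α i)`. -/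
def monom {d : ℕ} (α : Fin d → ℕ) (x : Fin d → ℝ) : ℝ := ∏ i, x i ^ α i

/-- Topological support of a measure on `ℝ`. -/
def measSupport (P : Measure ℝ) : Set ℝ := {x | ∀ U ∈ nhds x, P U ≠ 0}

/-- `ω(P,t) = min(|Support(P)| − 1, t)`, equal to `t` when the support is infinite. -/
def omegaP (P : Measure ℝ) (t : ℕ) : ℕ :=
  if (measSupport P).Finite then min ((measSupport P).ncard - 1) t else t

/-- `M' = min(M, d·(|Support(P)| − 1))`, equal to `M` when the support is infinite. -/
def capM (P : Measure ℝ) (d M : ℕ) : ℕ :=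
  if (measSupport P).Finite then min M (d * ((measSupport P).ncard - 1)) else M

/-- `F_{s,t}`: multi-indices `α ∈ ℕ^d` with all entries `≤ s` and total degree `t`. -/
def Fst (d s t : ℕ) : Finset (Fin d → ℕ) :=
  (Fintype.piFinset fun _ : Fin d => Finset.range (s + 1)).filter fun α => ∑ i, α i = t

/-- The `(d,M)`-multiplicities set `C = ∪_{t=0}^{M'} F_{ω(P,M),t}`. -/
def multSet (P : Measure ℝ) (d M : ℕ) : Finset (Fin d → ℕ) :=
  (Fintype.piFinset fun _ : Fin d => Finset.range (omegaP P M + 1)).filter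
    fun α => ∑ i, α i ≤ capM P d M

/-- `n`-th moment `c_n = E[X^n]` of `P`. -/
def momentP (P : Measure ℝ) (n : ℕ) : ℝ := ∫ x, x ^ n ∂P

/-- Hankel determinant `D_n = det((c_{i+j})_{0 ≤ i,j ≤ n})` of moments of `P`. -/
def Dn (P : Measure ℝ) (n : ℕ) : ℝ :=
  Matrix.det (Matrix.of fun i j : Fin (n + 1) => momentP P ((i : ℕ) + (j : ℕ)))

/-- `c(P,k) = min(min_{1 ≤ i ≤ ω(P,k)} (D_i/D_{i−1})^{k/2}, 1)`. -/
def cPk (P : Measure ℝ) (k : ℕ) : ℝ :=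
  sInf (insert (1 : ℝ)
    ((fun i => (Dn P i / Dn P (i - 1)) ^ ((k : ℝ) / 2)) '' Set.Icc 1 (omegaP P k)))

/-- `max(max_{1 ≤ i ≤ ω(P,k)} (D_i/D_{i−1})^{k/2}, 1)`. -/
def cPkMax (P : Measure ℝ) (k : ℕ) : ℝ :=
  sSup (insert (1 : ℝ)
    ((fun i => (Dn P i / Dn P (i - 1)) ^ ((k : ℝ) / 2)) '' Set.Icc 1 (omegaP P k)))

/-- `max(max_{1 ≤ i ≤ ω(P,k)} (D_i/D_{i−1})^k, 1)`. -/
def ratioMaxK (P : Measure ℝ) (k : ℕ) : ℝ :=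
  sSup (insert (1 : ℝ)
    ((fun i => (Dn P i / Dn P (i - 1)) ^ k) '' Set.Icc 1 (omegaP P k)))

/-- `min(min_{1 ≤ i ≤ ω(P,k)} (D_i/D_{i−1})^k, 1)`. -/
def ratioMinK (P : Measure ℝ) (k : ℕ) : ℝ :=
  sInf (insert (1 : ℝ)
    ((fun i => (Dn P i / Dn P (i - 1)) ^ k) '' Set.Icc 1 (omegaP P k)))

/-- `f(P,k) = max(c_{2ω(P,k)}^k, 1) · max(max_i (D_i/D_{i−1})^k, 1) / min(min_i (D_i/D_{i−1})^k, 1)`. -/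
def fPk (P : Measure ℝ) (k : ℕ) : ℝ :=
  max (momentP P (2 * omegaP P k) ^ k) 1 * ratioMaxK P k / ratioMinK P k

/-- `C(P,k) = f(P,k)/c(P,k)`. -/
def CPk (P : Measure ℝ) (k : ℕ) : ℝ := fPk P k / cPk P k

/-- An admissible distribution: a non-constant probability measure supported in `[-1,1]`. -/
def AdmissibleDist (P : Measure ℝ) : Prop :=
  IsProbabilityMeasure P ∧ P (Set.Icc (-1 : ℝ) 1) = 1 ∧ ∀ c : ℝ, P {c} < 1

/-- The product measure `P^{⊗d}` on `ℝ^d`. -/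
def piP (P : Measure ℝ) (d : ℕ) : Measure (Fin d → ℝ) := Measure.pi fun _ => P

/-- The joint law of `N` i.i.d. samples from `P^{⊗d}`. -/
def samples (P : Measure ℝ) (d N : ℕ) : Measure (Fin N → Fin d → ℝ) :=
  Measure.pi fun _ => piP P d

/-- Order of polynomial approximation of `σ` on `[-1,1]`: the least degree `r` for which
some real polynomial of degree `r` is uniformly within `ε` of `σ` on `[-1,1]`. -/
def approxOrder (σ : ℝ → ℝ) (ε : ℝ) : ℕ :=
  sInf {r : ℕ | ∃ p : Polynomial ℝ, p.natDegree = r ∧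
    ∀ x ∈ Set.Icc (-1 : ℝ) 1, |p.eval x - σ x| ≤ ε}

/-- An admissible activation function. -/
def AdmissibleActivation (σ : ℝ → ℝ) : Prop :=
  (∀ ε : ℝ, 0 < ε → ∃ p : Polynomial ℝ,
      ∀ x ∈ Set.Icc (-1 : ℝ) 1, |p.eval x - σ x| ≤ ε) ∧
  (∀ ε : ℝ, 0 < ε → ∃ p : Polynomial ℝ, p.natDegree = approxOrder σ ε ∧
      (∀ x ∈ Set.Icc (-1 : ℝ) 1, |p.eval x - σ x| ≤ ε) ∧
      ∀ x ∈ Set.Icc (-1 : ℝ) 1, p.eval x ∈ Set.Icc (0 : ℝ) 1) ∧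
  LipschitzOnWith 1 σ (Set.Icc (-1) 1) ∧
  ∀ x ∈ Set.Icc (-1 : ℝ) 1, |σ x| ≤ 1

/-- Quadratic form `vᵀ A v`. -/
def quadForm {n : Type*} [Fintype n] (A : Matrix n n ℝ) (v : n → ℝ) : ℝ :=
  ∑ i, ∑ j, v i * A i j * v j

/-- Smallest eigenvalue of a symmetric matrix (Rayleigh characterization). -/
def lamMin {n : Type*} [Fintype n] (A : Matrix n n ℝ) : ℝ :=
  sInf {r : ℝ | ∃ v : n → ℝ, ∑ i, v i ^ 2 = 1 ∧ r = quadForm A v}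

/-- Largest eigenvalue of a symmetric matrix (Rayleigh characterization). -/
def lamMax {n : Type*} [Fintype n] (A : Matrix n n ℝ) : ℝ :=
  sSup {r : ℝ | ∃ v : n → ℝ, ∑ i, v i ^ 2 = 1 ∧ r = quadForm A v}

/-- Smallest singular value. -/
def sigMin {n : Type*} [Fintype n] (A : Matrix n n ℝ) : ℝ :=
  Real.sqrt (lamMin (Aᵀ * A))

/-- Largest singular value. -/
def sigMax {n : Type*} [Fintype n] (A : Matrix n n ℝ) : ℝ :=
  Real.sqrt (lamMax (Aᵀ * A))

/-- The covariance matrix `Σ = E[𝒳 𝒳ᵀ]` of the monomials indexed by the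
`(d,k)`-multiplicities set, for input `X ∼ P^{⊗d}`. -/
def covMat (P : Measure ℝ) (d k : ℕ) :
    Matrix {α // α ∈ multSet P d k} {α // α ∈ multSet P d k} ℝ :=
  Matrix.of fun a b => ∫ x, monom a.1 x * monom b.1 x ∂(piP P d)


/-! Both networks compute polynomial functions of degree at most `k ^ L`, and these functions form
a vector space `V` whose dimension is at most the number of monomials of degree at most `k ^ L`.
It therefore suffices that random points determine the elements of `V`, which amounts to a
nonvanishing determinant. Expand the determinant of the values of a basis of `V` along the row of
one sample point: given the other points, it is a combination of the basis functions with one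
coefficient a smaller determinant, nonzero almost surely by induction. So it is a nonzero element
of `V` evaluated at an independent point, and its zero set is null since an algebraic hypersurface
has Lebesgue measure zero. -/

section ProductMeasure

theorem ae_pi_of_ae_ae_cons {n : ℕ} {α : Fin (n + 1) → Type*} [∀ i, MeasurableSpace (α i)]
    (μ : ∀ i, Measure (α i)) [∀ i, SigmaFinite (μ i)] {P : (∀ i, α i) → Prop}
    (hP : MeasurableSet {x | P x})
    (h : ∀ᵐ t ∂Measure.pi fun i : Fin n => μ i.succ, ∀ᵐ y ∂μ 0, P (Fin.cons y t)) :
    ∀ᵐ x ∂Measure.pi μ, P x := by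
  have split := measurePreserving_piFinSuccAbove μ 0
  have hcons : MeasurableSet {z : α 0 × (∀ i : Fin n, α i.succ) | P (Fin.cons z.1 z.2)} := by
    refine (split.symm.measurable hP).congr (Set.ext fun z => ?_)
    change P (Fin.insertNth 0 z.1 z.2) ↔ P (Fin.cons z.1 z.2)
    rw [Fin.insertNth_zero]
    rfl
  have hprod : ∀ᵐ z ∂(μ 0).prod (Measure.pi fun i : Fin n => μ i.succ),
      P (Fin.cons z.1 z.2) := by
    rwa [Measure.ae_prod_iff_ae_ae hcons, Measure.ae_ae_comm hcons]
  filter_upwards [split.quasiMeasurePreserving.ae hprod] with x hx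
  rw [← Fin.cons_self_tail x]
  exact hx

theorem measurePreserving_pi_comp_of_injective {ι κ : Type*} [Fintype ι] [Fintype κ]
    {α : ι → Type*} [∀ i, MeasurableSpace (α i)] (μ : ∀ i, Measure (α i))
    [∀ i, IsProbabilityMeasure (μ i)] {g : κ → ι} (hg : g.Injective) :
    MeasurePreserving (fun (x : ∀ i, α i) j => x (g j)) (Measure.pi μ)
      (Measure.pi fun j => μ (g j)) := by
  refine ⟨by fun_prop, ?_⟩
  have indep : ProbabilityTheory.iIndepFun (fun j (x : ∀ i, α i) => x (g j)) (Measure.pi μ) :=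
    (ProbabilityTheory.iIndepFun_pi (X := fun _ => id) fun _ => aemeasurable_id).precomp hg
  rw [indep.map_fun_eq_pi_map fun j => (measurable_pi_apply (g j)).aemeasurable]
  congr with j : 1
  exact (measurePreserving_eval μ (g j)).map_eq

end ProductMeasure

section GenericPoints

variable {α 𝕜 : Type*} [MeasurableSpace α] [Field 𝕜] [MeasurableSpace 𝕜]
  [MeasurableSingletonClass 𝕜] [MeasurableAdd₂ 𝕜] [MeasurableMul₂ 𝕜]

theorem ae_det_eval_ne_zero {n : ℕ} (ν : Fin n → Measure α) [∀ i, SigmaFinite (ν i)]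
    {f : Fin n → α → 𝕜} (hf : ∀ j, Measurable (f j))
    (hν : ∀ i, ∀ c : Fin n → 𝕜, c ≠ 0 → ∀ᵐ x ∂ν i, ∑ j, c j * f j x ≠ 0) :
    ∀ᵐ X ∂Measure.pi ν, (Matrix.of fun i j => f j (X i)).det ≠ 0 := by
  induction n with
  | zero => simp
  | succ n ih =>
    refine ae_pi_of_ae_ae_cons ν ?_ ?_
    · refine (measurableSet_singleton (0 : 𝕜)).compl.preimage ?_
      simp only [det_apply', of_apply]
      fun_prop
    have smaller : ∀ᵐ t ∂Measure.pi fun i : Fin n => ν i.succ,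
        (Matrix.of fun i j : Fin n => f j.succ (t i)).det ≠ 0 := by
      refine ih (fun i => ν i.succ) (fun j => hf j.succ) fun i c hc => ?_
      simpa [Fin.sum_univ_succ] using
        hν i.succ (Fin.cons 0 c) fun h0 => hc (funext fun j => congrFun h0 j.succ)
    filter_upwards [smaller] with t ht
    let cofactor : Fin (n + 1) → 𝕜 := fun j =>
      (-1) ^ (j : ℕ) * (Matrix.of fun i k : Fin n => f (j.succAbove k) (t i)).det
    have hcofactor : cofactor ≠ 0 := fun h0 => ht (by simpa [cofactor] using congrFun h0 0)
    filter_upwards [hν 0 cofactor hcofactor] with y hy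
    convert hy using 1
    rw [det_succ_row_zero]
    refine Finset.sum_congr rfl fun j _ => ?_
    rw [of_apply, Fin.cons_zero, mul_right_comm]
    rfl

theorem ae_eq_zero_of_eval_eq_zero {ι : Type*} [Fintype ι] (ν : ι → Measure α)
    [∀ i, IsProbabilityMeasure (ν i)] (V : Submodule 𝕜 (α → 𝕜)) [FiniteDimensional 𝕜 V]
    (hV : Module.finrank 𝕜 V ≤ Fintype.card ι) (hmeas : ∀ f ∈ V, Measurable f)
    (hν : ∀ i, ∀ f ∈ V, f ≠ 0 → ∀ᵐ x ∂ν i, f x ≠ 0) :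
    ∀ᵐ X ∂Measure.pi ν, ∀ f ∈ V, (∀ i, f (X i) = 0) → f = 0 := by
  obtain ⟨g⟩ : Nonempty (Fin (Module.finrank 𝕜 V) ↪ ι) :=
    Function.Embedding.nonempty_of_card_le (by simpa using hV)
  let b := Module.finBasis 𝕜 V
  have sum_apply (c : Fin (Module.finrank 𝕜 V) → 𝕜) (x : α) :
      (∑ j, c j • b j : V).1 x = ∑ j, c j * (b j).1 x := by
    simp
  have hdet := ae_det_eval_ne_zero (fun j => ν (g j)) (f := fun j => (b j).1)
    (fun j => hmeas _ (b j).2) fun i c hc => by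
      have hne : (∑ j, c j • b j : V) ≠ 0 := fun h0 =>
        hc (funext (Fintype.linearIndependent_iff.1 b.linearIndependent c h0))
      simpa only [sum_apply] using
        hν (g i) _ (∑ j, c j • b j : V).2 (ZeroMemClass.coe_eq_zero.not.2 hne)
  filter_upwards [(measurePreserving_pi_comp_of_injective ν g.injective).quasiMeasurePreserving.ae
    hdet] with X hX f hf hzero
  have hcoord : (b.repr ⟨f, hf⟩ : Fin (Module.finrank 𝕜 V) → 𝕜) = 0 := by
    refine eq_zero_of_mulVec_eq_zero hX (funext fun i => ?_)
    calc ∑ j, (b j).1 (X (g i)) * b.repr ⟨f, hf⟩ j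
        = (∑ j, b.repr ⟨f, hf⟩ j • b j : V).1 (X (g i)) := by simp only [sum_apply, mul_comm]
      _ = f (X (g i)) := by rw [b.sum_repr]
      _ = 0 := hzero (g i)
  exact congrArg Subtype.val (b.ext_elem (x := ⟨f, hf⟩) (y := 0) (by simp [hcoord]))

end GenericPoints

section PolynomialFunctions

theorem finrank_restrictTotalDegree (σ R : Type*) [Fintype σ] [CommSemiring R] [Nontrivial R]
    (D : ℕ) :
    Module.finrank R (MvPolynomial.restrictTotalDegree σ R D) =
      ∑ t ∈ Finset.range (D + 1), (Fintype.card σ + t - 1).choose t := by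
  have hexponents : {e : σ →₀ ℕ | (e.sum fun _ r => r) ≤ D} =
      (Finset.range (D + 1)).biUnion (Finset.univ.finsuppAntidiag (ι := σ)) := by
    ext e
    simp [Finsupp.sum_fintype, Order.lt_add_one_iff]
  have hdisjoint : ((Finset.range (D + 1) : Finset ℕ) : Set ℕ).PairwiseDisjoint
      (Finset.univ.finsuppAntidiag (ι := σ)) := by
    refine fun s _ t _ hst => Finset.disjoint_left.2 fun e hs ht => hst ?_
    rw [← (Finset.mem_finsuppAntidiag.1 hs).1, (Finset.mem_finsuppAntidiag.1 ht).1]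
  rw [MvPolynomial.restrictTotalDegree,
    Module.finrank_eq_nat_card_basis (MvPolynomial.basisRestrictSupport R _), hexponents,
    Nat.card_coe_set_eq, Set.ncard_coe_finset, Finset.card_biUnion hdisjoint]
  simp only [Finset.card_finsuppAntidiag_nat_eq_choose, Finset.card_univ]

theorem totalDegree_polynomial_aeval_le {σ R : Type*} [CommSemiring R] (p : MvPolynomial σ R)
    (Q : R[X]) : (aeval p Q).totalDegree ≤ Q.natDegree * p.totalDegree := by
  rw [aeval_eq_sum_range]
  refine MvPolynomial.totalDegree_finsetSum_le fun i hi => ?_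
  calc (Q.coeff i • p ^ i).totalDegree
      ≤ i * p.totalDegree :=
        (MvPolynomial.totalDegree_smul_le _ _).trans (MvPolynomial.totalDegree_pow _ _)
    _ ≤ Q.natDegree * p.totalDegree := by
        gcongr
        exact Finset.mem_range_succ_iff.1 hi

/-- The functions `R ^ σ → R` given by polynomials of total degree at most `D`, as a space of
functions: over a finite `R`, different polynomials may give the same function. -/
def polyFunDegreeLE (σ R : Type*) [CommSemiring R] (D : ℕ) : Submodule R ((σ → R) → R) :=
  (MvPolynomial.restrictTotalDegree σ R D).map
    (LinearMap.pi fun x => (MvPolynomial.aeval x).toLinearMap)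

section Basic

variable {σ R : Type*} [CommSemiring R] {D : ℕ}

theorem mem_polyFunDegreeLE {f : (σ → R) → R} :
    f ∈ polyFunDegreeLE σ R D ↔
      ∃ p : MvPolynomial σ R, p.totalDegree ≤ D ∧ ∀ x, MvPolynomial.eval x p = f x := by
  simp [polyFunDegreeLE, MvPolynomial.mem_restrictTotalDegree, funext_iff,
    MvPolynomial.aeval_eq_eval]

theorem polyFunDegreeLE_mono {D' : ℕ} (h : D ≤ D') :
    polyFunDegreeLE σ R D ≤ polyFunDegreeLE σ R D' := fun _ hf =>
  let ⟨p, hp, hpf⟩ := mem_polyFunDegreeLE.1 hf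
  mem_polyFunDegreeLE.2 ⟨p, hp.trans h, hpf⟩

theorem coordinate_mem_polyFunDegreeLE (i : σ) :
    (fun x => x i) ∈ polyFunDegreeLE σ R 1 :=
  mem_polyFunDegreeLE.2 ⟨.X i, (MvPolynomial.totalDegree_monomial_le _ _).trans (by simp),
    fun _ => MvPolynomial.eval_X i⟩

theorem polynomial_eval_comp_mem_polyFunDegreeLE (Q : R[X]) {f : (σ → R) → R}
    (hf : f ∈ polyFunDegreeLE σ R D) :
    (fun x => Q.eval (f x)) ∈ polyFunDegreeLE σ R (Q.natDegree * D) := by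
  obtain ⟨p, hp, hpf⟩ := mem_polyFunDegreeLE.1 hf
  refine mem_polyFunDegreeLE.2 ⟨aeval p Q, ?_, fun x => ?_⟩
  · exact (totalDegree_polynomial_aeval_le p Q).trans (Nat.mul_le_mul_left _ hp)
  · simp only [← hpf, ← MvPolynomial.aeval_eq_eval, ← aeval_algHom_apply,
      ← coe_aeval_eq_eval]

end Basic

instance (σ R : Type*) [Finite σ] [CommSemiring R] (D : ℕ) :
    Module.Finite R (polyFunDegreeLE σ R D) :=
  Module.Finite.map _ _

theorem finrank_polyFunDegreeLE_le (σ R : Type*) [Fintype σ] [CommSemiring R] [Nontrivial R]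
    (D : ℕ) :
    Module.finrank R (polyFunDegreeLE σ R D) ≤
      ∑ t ∈ Finset.range (D + 1), (Fintype.card σ + t - 1).choose t :=
  (Submodule.finrank_map_le _ _).trans_eq (finrank_restrictTotalDegree σ R D)

end PolynomialFunctions

section NullHypersurfaces

/-- The measure `ν` on `R ^ σ` gives no mass to any proper algebraic hypersurface. Independent
data points with such laws are almost surely in general position for interpolation by polynomials
of bounded degree. -/
def NullHypersurfaces {σ R : Type*} [CommSemiring R] [MeasurableSpace R] (ν : Measure (σ → R)) :
    Prop :=
  ∀ p : MvPolynomial σ R, p ≠ 0 → ∀ᵐ x ∂ν, MvPolynomial.eval x p ≠ 0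

theorem NullHypersurfaces.of_absolutelyContinuous {σ R : Type*} [CommSemiring R]
    [MeasurableSpace R] {μ ν : Measure (σ → R)} (hμ : NullHypersurfaces μ) (h : ν ≪ μ) :
    NullHypersurfaces ν :=
  fun p hp => h.ae_le (hμ p hp)

theorem measurable_mvPolynomial_eval {σ R : Type*} [CommSemiring R] [MeasurableSpace R]
    [MeasurableAdd₂ R] [MeasurableMul₂ R] (p : MvPolynomial σ R) :
    Measurable fun x : σ → R => MvPolynomial.eval x p := by
  simp only [MvPolynomial.eval_eq]
  fun_prop

theorem nullHypersurfaces_pi {R : Type*} [CommRing R] [IsDomain R] [MeasurableSpace R]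
    [MeasurableSingletonClass R] [MeasurableAdd₂ R] [MeasurableMul₂ R] {n : ℕ}
    (μ : Fin n → Measure R) [∀ i, SigmaFinite (μ i)] [∀ i, NullSingletonClass (μ i)] :
    NullHypersurfaces (Measure.pi μ) := by
  intro p hp
  induction n with
  | zero =>
    refine .of_forall fun x => ?_
    rw [MvPolynomial.eq_C_of_isEmpty p, MvPolynomial.eval_C]
    exact fun h0 => hp (by rw [MvPolynomial.eq_C_of_isEmpty p, h0, map_zero])
  | succ n ih =>
    refine ae_pi_of_ae_ae_cons μ
      ((measurableSet_singleton (0 : R)).compl.preimage (measurable_mvPolynomial_eval p)) ?_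
    let q := MvPolynomial.finSuccEquiv R n p
    have hq : q.leadingCoeff ≠ 0 := by simpa [q] using hp
    filter_upwards [ih (fun i => μ i.succ) _ hq] with t ht
    have hqt : q.map (MvPolynomial.eval t) ≠ 0 := fun h0 =>
      ht (by simpa using congrArg (fun r => r.coeff q.natDegree) h0)
    filter_upwards [measure_eq_zero_iff_ae_notMem.1
      ((finite_setOfPred_isRoot hqt).measure_zero (μ 0))] with y hy
    rwa [MvPolynomial.eval_eq_eval_mv_eval']

end NullHypersurfaces

theorem ae_eq_of_eq_on_samples {σ ι 𝕜 : Type*} [Fintype σ] [Fintype ι] [Field 𝕜]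
    [MeasurableSpace 𝕜] [MeasurableSingletonClass 𝕜] [MeasurableAdd₂ 𝕜] [MeasurableMul₂ 𝕜]
    (ν : ι → Measure (σ → 𝕜)) [∀ i, IsProbabilityMeasure (ν i)]
    (hν : ∀ i, NullHypersurfaces (ν i)) {D : ℕ}
    (hD : ∑ t ∈ Finset.range (D + 1), (Fintype.card σ + t - 1).choose t ≤ Fintype.card ι) :
    ∀ᵐ X ∂Measure.pi ν, ∀ f ∈ polyFunDegreeLE σ 𝕜 D, ∀ g ∈ polyFunDegreeLE σ 𝕜 D,
      (∀ i, f (X i) = g (X i)) → f = g := by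
  have hmeas : ∀ f ∈ polyFunDegreeLE σ 𝕜 D, Measurable f := fun f hf => by
    obtain ⟨p, -, hpf⟩ := mem_polyFunDegreeLE.1 hf
    simpa only [hpf] using measurable_mvPolynomial_eval p
  have hne : ∀ i, ∀ f ∈ polyFunDegreeLE σ 𝕜 D, f ≠ 0 → ∀ᵐ x ∂ν i, f x ≠ 0 := by
    intro i f hf hf0
    obtain ⟨p, -, hpf⟩ := mem_polyFunDegreeLE.1 hf
    have hp : p ≠ 0 := fun h0 => hf0 (funext fun x => by rw [← hpf, h0, map_zero, Pi.zero_apply])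
    simpa only [hpf] using hν i p hp
  filter_upwards [ae_eq_zero_of_eval_eq_zero ν (polyFunDegreeLE σ 𝕜 D)
    ((finrank_polyFunDegreeLE_le σ 𝕜 D).trans hD) hmeas hne] with X hX f hf g hg heq
  exact sub_eq_zero.1 (hX _ (sub_mem hf hg) fun i => sub_eq_zero.2 (heq i))

section Network

variable {d m : ℕ} (Q : ℝ[X])

theorem applyLayer_mem_polyFunDegreeLE {n D : ℕ} (W : Matrix (Fin m) (Fin n) ℝ)
    {v : (Fin d → ℝ) → Fin n → ℝ} (hv : ∀ i, (fun x => v x i) ∈ polyFunDegreeLE (Fin d) ℝ D)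
    (j : Fin m) :
    (fun x => applyLayer Q.eval W (v x) j) ∈
      polyFunDegreeLE (Fin d) ℝ (Q.natDegree * D) := by
  refine polynomial_eval_comp_mem_polyFunDegreeLE Q (f := fun x => ∑ i, W j i * v x i) ?_
  convert sum_mem fun i (_ : i ∈ Finset.univ) => Submodule.smul_mem _ (W j i) (hv i) using 1
  ext x
  simp

theorem iterLayers_mem_polyFunDegreeLE {n D : ℕ} (Ws : Fin n → Matrix (Fin m) (Fin m) ℝ)
    {v : (Fin d → ℝ) → Fin m → ℝ} (hv : ∀ i, (fun x => v x i) ∈ polyFunDegreeLE (Fin d) ℝ D)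
    (j : Fin m) :
    (fun x => iterLayers Q.eval n Ws (v x) j) ∈
      polyFunDegreeLE (Fin d) ℝ (Q.natDegree ^ n * D) := by
  induction n generalizing j with
  | zero => simpa [iterLayers] using hv j
  | succ n ih =>
    rw [pow_succ', mul_assoc]
    exact applyLayer_mem_polyFunDegreeLE Q _ (ih fun i => Ws i.castSucc) j

theorem nnFun_mem_polyFunDegreeLE {n : ℕ} (a : Fin m → ℝ) (W1 : Matrix (Fin m) (Fin d) ℝ)
    (Ws : Fin n → Matrix (Fin m) (Fin m) ℝ) :
    nnFun Q.eval a W1 Ws ∈ polyFunDegreeLE (Fin d) ℝ (Q.natDegree ^ (n + 1)) := by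
  have hidden (j : Fin m) : (fun x => iterLayers Q.eval n Ws (applyLayer Q.eval W1 x) j) ∈
      polyFunDegreeLE (Fin d) ℝ (Q.natDegree ^ (n + 1)) := by
    simpa [pow_succ] using iterLayers_mem_polyFunDegreeLE Q Ws
      (applyLayer_mem_polyFunDegreeLE Q W1 coordinate_mem_polyFunDegreeLE) j
  convert sum_mem fun j (_ : j ∈ Finset.univ) => Submodule.smul_mem _ (a j) (hidden j) using 1
  ext x
  simp [nnFun]

end Network

theorem overparametrized_polynomial_recovery_continuous_general
    {d n N k : ℕ} {Q : ℝ[X]} (hQ : Q.natDegree ≤ k)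
    (ν : Fin N → Measure (Fin d → ℝ)) [∀ i, IsProbabilityMeasure (ν i)]
    (hν : ∀ i, NullHypersurfaces (ν i))
    (hN : ∑ t ∈ Finset.range (k ^ (n + 1) + 1), (d + t - 1).choose t ≤ N) :
    ∀ᵐ X ∂Measure.pi ν, ∀ (m mh : ℕ)
      (a : Fin m → ℝ) (W1 : Matrix (Fin m) (Fin d) ℝ) (Ws : Fin n → Matrix (Fin m) (Fin m) ℝ)
      (ah : Fin mh → ℝ) (V1 : Matrix (Fin mh) (Fin d) ℝ)
      (Vs : Fin n → Matrix (Fin mh) (Fin mh) ℝ),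
      (∀ i, nnFun Q.eval ah V1 Vs (X i) = nnFun Q.eval a W1 Ws (X i)) →
      nnFun Q.eval a W1 Ws = nnFun Q.eval ah V1 Vs := by
  have hdeg := polyFunDegreeLE_mono (σ := Fin d) (R := ℝ) (Nat.pow_le_pow_left hQ (n + 1))
  filter_upwards [ae_eq_of_eq_on_samples ν hν (by simpa using hN)] with X hX
    m mh a W1 Ws ah V1 Vs interpolates
  exact hX _ (hdeg (nnFun_mem_polyFunDegreeLE Q a W1 Ws)) _
    (hdeg (nnFun_mem_polyFunDegreeLE Q ah V1 Vs)) fun i => (interpolates i).symm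

/-- Polynomial activation, jointly continuous inputs, teacher/student:
provided `N ≥ Σ_{t=0}^{k^L} C(d+t−1, t)`, with probability one any interpolating student
network of width `m̂ ≥ m*` agrees with the teacher everywhere. -/
theorem overparametrized_polynomial_recovery_continuous
    (d m L N k : ℕ) (hL : 1 ≤ L)
    (Q : Polynomial ℝ) (hQ : Q.natDegree = k)
    (ν : Measure (Fin d → ℝ)) (hν : IsProbabilityMeasure ν)
    (hac : ν ≪ (volume : Measure (Fin d → ℝ)))
    (a : Fin m → ℝ) (W1 : Matrix (Fin m) (Fin d) ℝ)
    (Ws : Fin (L - 1) → Matrix (Fin m) (Fin m) ℝ)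
    (hN : N ≥ ∑ t ∈ Finset.range (k ^ L + 1), (d + t - 1).choose t) :
    (Measure.pi fun _ : Fin N => ν)
      {X | ∀ (mh : ℕ), m ≤ mh →
        ∀ (ah : Fin mh → ℝ) (V1 : Matrix (Fin mh) (Fin d) ℝ)
          (Vs : Fin (L - 1) → Matrix (Fin mh) (Fin mh) ℝ),
        (∀ i : Fin N, nnFun Q.eval ah V1 Vs (X i) = nnFun Q.eval a W1 Ws (X i)) →
        ∀ x : Fin d → ℝ, nnFun Q.eval a W1 Ws x = nnFun Q.eval ah V1 Vs x} = 1 := by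
  obtain ⟨n, rfl⟩ := Nat.exists_eq_add_of_le' hL
  have hnull : NullHypersurfaces ν :=
    (nullHypersurfaces_pi fun _ => volume).of_absolutelyContinuous hac
  refine (measure_congr (Filter.eventuallyEq_univ.2 ?_)).trans measure_univ
  filter_upwards [overparametrized_polynomial_recovery_continuous_general hQ.le
    (fun _ : Fin N => ν) (fun _ => hnull) hN] with X hX mh _ ah V1 Vs interpolates
  exact congrFun (hX m mh a W1 Ws ah V1 Vs interpolates)

end
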